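/- arXiv:2110.10961 — 2 statements merged into one kernel-verified Lean document; each statement's English description precedes it below -/
import Mathlib

section
/- Let (Ω, μ) be a probability space and let L, U, c : Ω → ℝ be measurable functions with L(x) ≤ c(x) ≤ U(x) for all x, and with L, U, c integrable. Define p*(x) = 0 if U(x) ≤ 0, p*(x) = 1 if L(x) ≥ 0, and p*(x) = U(x)/(U(x)−L(x)) if L(x) < 0 < U(x). Then the expected regret of the randomized rule that chooses action 1 with probability p*(x) satisfies ∫ (max(c(x),0) − p*(x)·c(x)) dμ(x) ≤ ∫ (−L(x)·U(x)/(U(x)−L(x)))·I{L(x)<0<U(x)} dμ(x). -/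
/-!
For `p ∈ [0, 1]` the regret `max c 0 - p * c = max ((1 - p) * c) (-(p * c))` is the maximum of a
nondecreasing and a nonincreasing function of `c`, so on `l ≤ c ≤ u` it is at most
`max ((1 - p) * u) (-(p * l))`. When `l < 0 < u`, the minimax rule is the `p` that equalizes the
two terms, and their common value is `-l * u / (u - l)`. When the sign of `c` is identified, the
rule picks the optimal action and both terms are at most `0`, one of them being `0`.
-/

open MeasureTheory

/-- The regret of choosing action `1` with probability `p`, and action `-1` otherwise, when the
treatment effect is `c`: the shortfall `max c 0 - p * c` from the optimal value. -/
def regret {R : Type*} [Ring R] [LinearOrder R] (p c : R) : R :=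
  max c 0 - p * c

/-- The largest regret of choosing action `1` with probability `p ∈ [0, 1]` over the treatment
effects `c ∈ [l, u]`; it is attained at an endpoint because the regret is convex in `c`. -/
def worstRegret {R : Type*} [Ring R] [LinearOrder R] (p l u : R) : R :=
  max ((1 - p) * u) (-(p * l))

/-- The minimax rule: the probability of choosing action `1` that minimizes the worst-case regret
when the treatment effect is only known to lie in `[l, u]`. -/
def minimaxProb {K : Type*} [Field K] [LinearOrder K] (l u : K) : K :=
  if u ≤ 0 then 0 else if 0 ≤ l then 1 else u / (u - l)

/-- The worst-case regret of the minimax rule on `[l, u]`, in closed form. -/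
def minimaxRegret {K : Type*} [Field K] [LinearOrder K] (l u : K) : K :=
  if l < 0 ∧ 0 < u then -l * u / (u - l) else 0

section OrderedRing

variable {R : Type*} [Ring R] [LinearOrder R] [IsOrderedRing R] {p c l u : R}

lemma regret_eq_max (p c : R) : regret p c = max ((1 - p) * c) (-(p * c)) := by
  rw [regret, ← max_sub_sub_right, sub_mul, one_mul, zero_sub]

lemma regret_nonneg (hp : p ∈ Set.Icc 0 1) : 0 ≤ regret p c := by
  rw [regret_eq_max]
  rcases le_total 0 c with hc | hc
  · exact le_max_of_le_left (mul_nonneg (sub_nonneg.2 hp.2) hc)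
  · exact le_max_of_le_right (neg_nonneg.2 (mul_nonpos_of_nonneg_of_nonpos hp.1 hc))

lemma regret_le_worstRegret (hp : p ∈ Set.Icc 0 1) (hc : c ∈ Set.Icc l u) :
    regret p c ≤ worstRegret p l u := by
  rw [regret_eq_max]
  exact max_le_max (mul_le_mul_of_nonneg_left hc.2 (sub_nonneg.2 hp.2))
    (neg_le_neg (mul_le_mul_of_nonneg_left hc.1 hp.1))

end OrderedRing

section OrderedField

variable {K : Type*} [Field K] [LinearOrder K] [IsStrictOrderedRing K]

lemma minimaxProb_mem_Icc (l u : K) : minimaxProb l u ∈ Set.Icc 0 1 := by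
  unfold minimaxProb
  split_ifs with hu hl
  · exact Set.left_mem_Icc.2 zero_le_one
  · exact Set.right_mem_Icc.2 zero_le_one
  · rw [not_le] at hu hl
    have hd : 0 < u - l := sub_pos.2 (hl.trans hu)
    exact ⟨div_nonneg hu.le hd.le, (div_le_one hd).2 (by linarith)⟩

lemma worstRegret_minimaxProb (l u : K) :
    worstRegret (minimaxProb l u) l u = minimaxRegret l u := by
  unfold worstRegret minimaxProb minimaxRegret
  rcases le_or_gt u 0 with hu | hu
  · simp [hu, hu.not_gt]
  rcases le_or_gt 0 l with hl | hl
  · simp [hu.not_ge, hl, hl.not_gt]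
  have hd : u - l ≠ 0 := (sub_pos.2 (hl.trans hu)).ne'
  have left_eq : (1 - u / (u - l)) * u = -l * u / (u - l) := by field_simp; ring
  have right_eq : -(u / (u - l) * l) = -l * u / (u - l) := by ring
  rw [if_neg hu.not_ge, if_neg hl.not_ge, if_pos ⟨hl, hu⟩, left_eq, right_eq, max_self]

lemma abs_minimaxRegret_le (l u : K) : |minimaxRegret l u| ≤ |u| := by
  unfold minimaxRegret
  split_ifs with h
  · obtain ⟨hl, hu⟩ := h
    have hd : 0 < u - l := sub_pos.2 (hl.trans hu)
    have hlu : 0 ≤ -l * u := mul_nonneg (neg_nonneg.2 hl.le) hu.le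
    rw [abs_of_nonneg (div_nonneg hlu hd.le), abs_of_pos hu, div_le_iff₀ hd]
    linarith [mul_pos hu hu]
  · simp

end OrderedField

lemma measurable_minimaxProb : Measurable fun b : ℝ × ℝ ↦ minimaxProb b.1 b.2 :=
  .ite (measurableSet_le measurable_snd measurable_const) measurable_const <|
    .ite (measurableSet_le measurable_const measurable_fst) measurable_const (by fun_prop)

lemma measurable_minimaxRegret : Measurable fun b : ℝ × ℝ ↦ minimaxRegret b.1 b.2 :=
  .ite ((measurableSet_lt measurable_fst measurable_const).inter
    (measurableSet_lt measurable_const measurable_snd)) (by fun_prop) measurable_const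

section Integral

variable {Ω : Type*} [MeasurableSpace Ω] {μ : Measure Ω} {p L U c : Ω → ℝ}

lemma integrable_minimaxRegret (hL : AEMeasurable L μ) (hU : Integrable U μ) :
    Integrable (fun x ↦ minimaxRegret (L x) (U x)) μ :=
  hU.mono (measurable_minimaxRegret.comp_aemeasurable
    (hL.prodMk hU.aemeasurable)).aestronglyMeasurable
    (.of_forall fun x ↦ abs_minimaxRegret_le (L x) (U x))

lemma integrable_regret (hpm : AEMeasurable p μ) (hcm : AEMeasurable c μ)
    (hp : ∀ᵐ x ∂μ, p x ∈ Set.Icc 0 1) (hc : ∀ᵐ x ∂μ, c x ∈ Set.Icc (L x) (U x))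
    (hi : Integrable (fun x ↦ worstRegret (p x) (L x) (U x)) μ) :
    Integrable (fun x ↦ regret (p x) (c x)) μ := by
  have hm : AEMeasurable (fun x ↦ regret (p x) (c x)) μ :=
    (hcm.max aemeasurable_const).sub (hpm.mul hcm)
  refine hi.mono' hm.aestronglyMeasurable ?_
  filter_upwards [hp, hc] with x hpx hcx
  rw [Real.norm_of_nonneg (regret_nonneg hpx)]
  exact regret_le_worstRegret hpx hcx

lemma integral_regret_le_integral_worstRegret (hpm : AEMeasurable p μ) (hcm : AEMeasurable c μ)
    (hp : ∀ᵐ x ∂μ, p x ∈ Set.Icc 0 1) (hc : ∀ᵐ x ∂μ, c x ∈ Set.Icc (L x) (U x))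
    (hi : Integrable (fun x ↦ worstRegret (p x) (L x) (U x)) μ) :
    ∫ x, regret (p x) (c x) ∂μ ≤ ∫ x, worstRegret (p x) (L x) (U x) ∂μ := by
  refine integral_mono_ae (integrable_regret hpm hcm hp hc hi) hi ?_
  filter_upwards [hp, hc] with x hpx hcx using regret_le_worstRegret hpx hcx

theorem stmt_3_general (hL : AEMeasurable L μ) (hU : AEMeasurable U μ) (hcm : AEMeasurable c μ)
    (hc : ∀ᵐ x ∂μ, c x ∈ Set.Icc (L x) (U x))
    (hi : Integrable (fun x ↦ minimaxRegret (L x) (U x)) μ) :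
    ∫ x, regret (minimaxProb (L x) (U x)) (c x) ∂μ ≤ ∫ x, minimaxRegret (L x) (U x) ∂μ := by
  simp only [← worstRegret_minimaxProb] at hi ⊢
  exact integral_regret_le_integral_worstRegret
    (measurable_minimaxProb.comp_aemeasurable (hL.prodMk hU)) hcm
    (.of_forall fun x ↦ minimaxProb_mem_Icc (L x) (U x)) hc hi

end Integral

open Classical in
/-- Theorem 1 of the paper: on a probability space, with measurable integrable
`L ≤ c ≤ U` pointwise, the expected regret of the randomized rule choosing
action 1 with probability `p*(x) = 0` if `U x ≤ 0`, `1` if `L x ≥ 0`, and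
`U x/(U x − L x)` if `L x < 0 < U x`, is bounded by
`∫ (−L·U/(U−L))·I{L<0<U} dμ`. -/
theorem stmt_3 {Ω : Type*} [MeasurableSpace Ω] (μ : Measure Ω) [IsProbabilityMeasure μ]
    (L U c : Ω → ℝ) (hLm : Measurable L) (hUm : Measurable U) (hcm : Measurable c)
    (hLc : ∀ x, L x ≤ c x) (hcU : ∀ x, c x ≤ U x)
    (hLi : Integrable L μ) (hUi : Integrable U μ) (hci : Integrable c μ) :
    ∫ x, (max (c x) 0 -
        (if U x ≤ 0 then 0 else if 0 ≤ L x then 1 else U x / (U x - L x)) * c x) ∂μ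
      ≤ ∫ x, (if L x < 0 ∧ 0 < U x then -L x * U x / (U x - L x) else 0) ∂μ :=
  stmt_3_general hLm.aemeasurable hUm.aemeasurable hcm.aemeasurable
    (.of_forall fun x ↦ ⟨hLc x, hcU x⟩) (integrable_minimaxRegret hLm.aemeasurable hUi)
end

section
/- Let l₋₁ ≤ u₋₁ and l₁ ≤ u₁ be real numbers, set L = l₁ − u₋₁ and U = u₁ − l₋₁, and for d ∈ {−1,1} define P(d) = L·I{d=1} + l₋₁ and Q(d) = −U·I{d=−1} + l₁. With the preference weight w(d) = I{P(d) < Q(d)}, the lower-bound objective satisfies [(1−w(1))P(1) + w(1)Q(1)] − [(1−w(−1))P(−1) + w(−1)Q(−1)] = l₁ − l₋₁; hence the maximizing decision is d = 1 if l₁ > l₋₁ and d = −1 if l₁ < l₋₁ (the Wald maximin utility rule). -/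
/-- `P(d) = L·I{d=1} + l₋₁` with `L = l₁ − u₋₁`. -/
def P (lm1 um1 l1 u1 : ℝ) (d : ℤ) : ℝ :=
  (l1 - um1) * (if d = 1 then 1 else 0) + lm1

/-- `Q(d) = −U·I{d=−1} + l₁` with `U = u₁ − l₋₁`. -/
def Q (lm1 um1 l1 u1 : ℝ) (d : ℤ) : ℝ :=
  -(u1 - lm1) * (if d = -1 then 1 else 0) + l1

/-- The maximin weight `w(d) = I{P(d) < Q(d)}`. -/
noncomputable def wMaximin (lm1 um1 l1 u1 : ℝ) (d : ℤ) : ℝ :=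
  if P lm1 um1 l1 u1 d < Q lm1 um1 l1 u1 d then 1 else 0

/-- The lower-bound objective with weight `w`. -/
noncomputable def objMaximin (lm1 um1 l1 u1 : ℝ) (d : ℤ) : ℝ :=
  (1 - wMaximin lm1 um1 l1 u1 d) * P lm1 um1 l1 u1 d
    + wMaximin lm1 um1 l1 u1 d * Q lm1 um1 l1 u1 d

lemma ite_lt_weighted_sum_eq_max {R : Type*} [NonAssocRing R] [LinearOrder R] (a b : R) :
    (1 - if a < b then 1 else 0) * a + (if a < b then 1 else 0) * b = max a b := by
  split_ifs with hab
  · simp [hab.le]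
  · simp [not_lt.mp hab]

section Decisions

variable (lm1 um1 l1 u1 : ℝ)

lemma P_one : P lm1 um1 l1 u1 1 = l1 - um1 + lm1 := by
  simp [P]

lemma P_neg_one : P lm1 um1 l1 u1 (-1) = lm1 := by
  norm_num [P]

lemma Q_one : Q lm1 um1 l1 u1 1 = l1 := by
  norm_num [Q]

lemma Q_neg_one : Q lm1 um1 l1 u1 (-1) = -(u1 - lm1) + l1 := by
  simp [Q]

lemma objMaximin_eq_max (d : ℤ) :
    objMaximin lm1 um1 l1 u1 d = max (P lm1 um1 l1 u1 d) (Q lm1 um1 l1 u1 d) :=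
  ite_lt_weighted_sum_eq_max _ _

variable {lm1 um1 l1 u1}

lemma P_one_le_Q_one (h : lm1 ≤ um1) : P lm1 um1 l1 u1 1 ≤ Q lm1 um1 l1 u1 1 := by
  rw [P_one, Q_one]
  linarith

lemma Q_neg_one_le_P_neg_one (h : l1 ≤ u1) :
    Q lm1 um1 l1 u1 (-1) ≤ P lm1 um1 l1 u1 (-1) := by
  rw [P_neg_one, Q_neg_one]
  linarith

lemma objMaximin_one (h : lm1 ≤ um1) : objMaximin lm1 um1 l1 u1 1 = l1 := by
  rw [objMaximin_eq_max, max_eq_right (P_one_le_Q_one h), Q_one]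

lemma objMaximin_neg_one (h : l1 ≤ u1) : objMaximin lm1 um1 l1 u1 (-1) = lm1 := by
  rw [objMaximin_eq_max, max_eq_left (Q_neg_one_le_P_neg_one h), P_neg_one]

end Decisions

/-- (Wald) maximin utility row of Table 1: with `w(d) = I{P(d) < Q(d)}`, the
difference of the lower-bound objective between `d = 1` and `d = −1` equals
`l₁ − l₋₁`; hence the maximizing decision is `d = 1` if `l₁ > l₋₁` and `d = −1`
if `l₁ < l₋₁`. -/
theorem stmt_11 (lm1 um1 l1 u1 : ℝ) (h1 : lm1 ≤ um1) (h2 : l1 ≤ u1) :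
    objMaximin lm1 um1 l1 u1 1 - objMaximin lm1 um1 l1 u1 (-1) = l1 - lm1
    ∧ (lm1 < l1 → objMaximin lm1 um1 l1 u1 (-1) < objMaximin lm1 um1 l1 u1 1)
    ∧ (l1 < lm1 → objMaximin lm1 um1 l1 u1 1 < objMaximin lm1 um1 l1 u1 (-1)) := by
  rw [objMaximin_one h1, objMaximin_neg_one h2]
  exact ⟨rfl, id, id⟩
end
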